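/- Fix λ0 ∈ ℝ. Suppose a design d satisfies: (i) ∑_{s∈R} p_s [Â_{s11} + x_0 Â_{s12}] = (y_0/(t−1)) B_t; (ii) ∑_{s∈R} p_s [Â_{s21} + x_0 Â_{s22}] = 0; (iii) ∑_{s∈R} p_s B̃ (F_s + x_0 (T_s + λ0 F_s)) B_t = 0; (iv) ∑_{s∈R} p_s = 1; (v) p_s = 0 for every s ∉ R. Then for every generalized inverse G of A_{d22} one has A_d(G) = (n y_0/(t−1)) B_t, and for every τ0 ∈ ℝ^t, every design d′, and every generalized inverse G′ of A_{d′22}: (1/t!) ∑_σ τ0′ S_σ′ A_{d′}(G′) S_σ τ0 ≤ (1/t!) ∑_σ τ0′ S_σ′ A_d(G) S_σ τ0, where the sums run over all permutations σ of {1,…,t}. -/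

import Mathlib

open Matrix MeasureTheory
open scoped Classical

noncomputable section

/-- A treatment sequence: assigns a treatment in `Fin t` to each period in `Fin p`. -/
abbrev TrtSeq (p t : ℕ) := Fin p → Fin t

/-- Treatment/period incidence matrix `T_s`. -/
def Tmat {p t : ℕ} (s : TrtSeq p t) : Matrix (Fin p) (Fin t) ℝ :=
  Matrix.of fun k i => if s k = i then 1 else 0

/-- Carryover incidence matrix `F_s`: first row zero, row `k` records the treatment
in period `k-1`. -/
def Fmat {p t : ℕ} (s : TrtSeq p t) : Matrix (Fin p) (Fin t) ℝ :=
  Matrix.of fun k i =>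
    if (k : ℕ) = 0 then 0
    else if s ⟨(k : ℕ) - 1, Nat.lt_of_le_of_lt (Nat.sub_le _ _) k.isLt⟩ = i then 1 else 0

/-- The all-ones `m × m` matrix `J_m`. -/
def Jmat (m : ℕ) : Matrix (Fin m) (Fin m) ℝ := Matrix.of fun _ _ => 1

/-- `B_t = I_t - J_t / t`. -/
def Bmat (t : ℕ) : Matrix (Fin t) (Fin t) ℝ := 1 - ((t : ℝ))⁻¹ • Jmat t

/-- `B̃ = Σ⁻¹ - Σ⁻¹ J_p Σ⁻¹ / (1_p' Σ⁻¹ 1_p)`. -/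
def Btil {p : ℕ} (S : Matrix (Fin p) (Fin p) ℝ) : Matrix (Fin p) (Fin p) ℝ :=
  S⁻¹ - (((fun _ => (1 : ℝ)) : Fin p → ℝ) ⬝ᵥ (S⁻¹ *ᵥ fun _ => (1 : ℝ)))⁻¹ •
    (S⁻¹ * Jmat p * S⁻¹)

/-- `G_1(s) = T_s`, `G_2(s) = F_s`. -/
def Gmat {p t : ℕ} (i : Fin 2) (s : TrtSeq p t) : Matrix (Fin p) (Fin t) ℝ :=
  if i = 0 then Tmat s else Fmat s

/-- An approximate design: nonnegative weights summing to one. -/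
def IsDesign {p t : ℕ} (w : TrtSeq p t → ℝ) : Prop :=
  (∀ s, 0 ≤ w s) ∧ ∑ s : TrtSeq p t, w s = 1

/-- `Ĉ_{sij} = B_t G_i(s)' B̃ G_j(s) B_t`. -/
def Chat {p t : ℕ} (S : Matrix (Fin p) (Fin p) ℝ) (s : TrtSeq p t) (i j : Fin 2) :
    Matrix (Fin t) (Fin t) ℝ :=
  Bmat t * (Gmat i s)ᵀ * Btil S * Gmat j s * Bmat t

/-- `c_{sij} = tr Ĉ_{sij}`. -/
def cseq {p t : ℕ} (S : Matrix (Fin p) (Fin p) ℝ) (s : TrtSeq p t) (i j : Fin 2) : ℝ :=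
  (Chat S s i j).trace

/-- `Ĉ_{dij} = n ∑_s p_s Ĉ_{sij}`. -/
def ChatD {p t : ℕ} (n : ℕ) (S : Matrix (Fin p) (Fin p) ℝ) (w : TrtSeq p t → ℝ)
    (i j : Fin 2) : Matrix (Fin t) (Fin t) ℝ :=
  (n : ℝ) • ∑ s : TrtSeq p t, w s • Chat S s i j

/-- `C_{dij} = Ĉ_{dij} - n (∑_s p_s G_i(s) B_t)' B̃ (∑_s p_s G_j(s) B_t)`. -/
def CD {p t : ℕ} (n : ℕ) (S : Matrix (Fin p) (Fin p) ℝ) (w : TrtSeq p t → ℝ)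
    (i j : Fin 2) : Matrix (Fin t) (Fin t) ℝ :=
  ChatD n S w i j -
    (n : ℝ) • ((∑ s : TrtSeq p t, w s • (Gmat i s * Bmat t))ᵀ * Btil S *
      (∑ s : TrtSeq p t, w s • (Gmat j s * Bmat t)))

/-- `c_{dij} = tr Ĉ_{dij} = n ∑_s p_s c_{sij}`. -/
def cD {p t : ℕ} (n : ℕ) (S : Matrix (Fin p) (Fin p) ℝ) (w : TrtSeq p t → ℝ)
    (i j : Fin 2) : ℝ :=
  (ChatD n S w i j).trace

/-- Fisher information matrix `C_{d,τ0,λ0}` for the direct treatment effects under the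
proportional model. -/
def CInfo {p t : ℕ} (n : ℕ) (S : Matrix (Fin p) (Fin p) ℝ) (w : TrtSeq p t → ℝ)
    (τ0 : Fin t → ℝ) (l0 : ℝ) : Matrix (Fin t) (Fin t) ℝ :=
  CD n S w 0 0 + l0 • (CD n S w 0 1 + CD n S w 1 0) + (l0 ^ 2) • CD n S w 1 1 -
    (τ0 ⬝ᵥ (CD n S w 1 1 *ᵥ τ0))⁻¹ •
      ((CD n S w 0 1 + l0 • CD n S w 1 1) * vecMulVec τ0 τ0 *
        (CD n S w 1 0 + l0 • CD n S w 1 1))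

/-- Permutation matrix `S_σ` with `(S_σ)_{j,i} = 1` iff `i = σ j`. -/
def Smat {t : ℕ} (σ : Equiv.Perm (Fin t)) : Matrix (Fin t) (Fin t) ℝ :=
  Matrix.of fun j i => if i = σ j then 1 else 0

/-- The relabelled sequence `σ ∘ s`. -/
def permSeq {p t : ℕ} (σ : Equiv.Perm (Fin t)) (s : TrtSeq p t) : TrtSeq p t := fun k => σ (s k)

/-- The design `σ d`, with weights `(σd)_s = p_{σ⁻¹ ∘ s}`. -/
def permDesign {p t : ℕ} (σ : Equiv.Perm (Fin t)) (w : TrtSeq p t → ℝ) : TrtSeq p t → ℝ :=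
  fun s => w (permSeq σ⁻¹ s)

/-- A design is symmetric if its weights are invariant under treatment relabelling. -/
def IsSymmetricDesign {p t : ℕ} (w : TrtSeq p t → ℝ) : Prop :=
  ∀ (σ : Equiv.Perm (Fin t)) (s : TrtSeq p t), w (permSeq σ s) = w s

/-- The symmetrized design `d*` with weights `p*_s = (1/t!) ∑_σ p_{σ⁻¹ ∘ s}`. -/
def symmetrize {p t : ℕ} (w : TrtSeq p t → ℝ) : TrtSeq p t → ℝ :=
  fun s => ((Nat.factorial t : ℝ))⁻¹ * ∑ σ : Equiv.Perm (Fin t), permDesign σ w s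

/-- `q_s(x) = c_{s11} + 2 c_{s12} x + c_{s22} x²`. -/
def qSeq {p t : ℕ} (S : Matrix (Fin p) (Fin p) ℝ) (s : TrtSeq p t) (x : ℝ) : ℝ :=
  cseq S s 0 0 + 2 * cseq S s 0 1 * x + cseq S s 1 1 * x ^ 2

/-- `q(x) = max_{s ∈ S} q_s(x)`. -/
def qMax (p t : ℕ) (S : Matrix (Fin p) (Fin p) ℝ) (x : ℝ) : ℝ :=
  sSup (Set.range fun s : TrtSeq p t => qSeq S s x)

/-- `y* = inf_x q(x)`. -/
def yStar (p t : ℕ) (S : Matrix (Fin p) (Fin p) ℝ) : ℝ := ⨅ x : ℝ, qMax p t S x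

/-- `q_d(x) = ∑_s p_s q_s(x)`. -/
def qD {p t : ℕ} (S : Matrix (Fin p) (Fin p) ℝ) (w : TrtSeq p t → ℝ) (x : ℝ) : ℝ :=
  ∑ s : TrtSeq p t, w s * qSeq S s x

/-- `x_d = -c_{d12}/c_{d22}`. -/
def xD {p t : ℕ} (n : ℕ) (S : Matrix (Fin p) (Fin p) ℝ) (w : TrtSeq p t → ℝ) : ℝ :=
  -(cD n S w 0 1) / cD n S w 1 1

/-- An exchangeable prior: a probability measure on `{τ : 1'τ = 0, τ ≠ 0}` that is
invariant under all coordinate permutations of `ℝ^t`. -/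
def IsExchangeablePrior {t : ℕ} (g : Measure (Fin t → ℝ)) : Prop :=
  IsProbabilityMeasure g ∧
    g {τ : Fin t → ℝ | ¬((∑ i, τ i) = 0 ∧ τ ≠ 0)} = 0 ∧
    ∀ σ : Equiv.Perm (Fin t), Measure.map (fun τ i => τ (σ i)) g = g

/-- `m_d(τ0) = min {ℓ' C_{d,τ0,λ0} ℓ : 1'ℓ = 0, ℓ'ℓ = 1}`. -/
def mD {p t : ℕ} (n : ℕ) (S : Matrix (Fin p) (Fin p) ℝ) (w : TrtSeq p t → ℝ) (l0 : ℝ)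
    (τ0 : Fin t → ℝ) : ℝ :=
  sInf {v : ℝ | ∃ l : Fin t → ℝ, (∑ i, l i) = 0 ∧ l ⬝ᵥ l = 1 ∧
    v = l ⬝ᵥ (CInfo n S w τ0 l0 *ᵥ l)}

/-- The E-criterion value `E_{g,λ0}(d) = ∫ m_d(τ0) g(dτ0)`. -/
def Ecrit {p t : ℕ} (n : ℕ) (S : Matrix (Fin p) (Fin p) ℝ) (g : Measure (Fin t → ℝ))
    (l0 : ℝ) (w : TrtSeq p t → ℝ) : ℝ :=
  ∫ τ0, mD n S w l0 τ0 ∂g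

/-- Competing designs for E-optimality: designs with a.e. positive `τ0' C_{d22} τ0`
and `g`-integrable `m_d`. -/
def EAdmissible {p t : ℕ} (n : ℕ) (S : Matrix (Fin p) (Fin p) ℝ) (g : Measure (Fin t → ℝ))
    (l0 : ℝ) (w : TrtSeq p t → ℝ) : Prop :=
  IsDesign w ∧ (∀ᵐ τ0 ∂g, 0 < τ0 ⬝ᵥ (CD n S w 1 1 *ᵥ τ0)) ∧
    Integrable (mD n S w l0) g

/-- `d` is `E_{g,λ0}`-optimal. -/
def EOptimal {p t : ℕ} (n : ℕ) (S : Matrix (Fin p) (Fin p) ℝ) (g : Measure (Fin t → ℝ))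
    (l0 : ℝ) (w : TrtSeq p t → ℝ) : Prop :=
  ∀ w' : TrtSeq p t → ℝ, EAdmissible n S g l0 w' → Ecrit n S g l0 w' ≤ Ecrit n S g l0 w

/-- A pseudo symmetric design: treatments equireplicated in each period,
and all `C_{dij}` completely symmetric. -/
def IsPseudoSymmetric {p t : ℕ} (n : ℕ) (S : Matrix (Fin p) (Fin p) ℝ)
    (w : TrtSeq p t → ℝ) : Prop :=
  (∀ (k : Fin p) (i : Fin t),
    (∑ s ∈ Finset.univ.filter fun s : TrtSeq p t => s k = i, w s) = 1 / (t : ℝ)) ∧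
  ∀ i j : Fin 2, ∃ a b : ℝ, CD n S w i j = a • (1 : Matrix (Fin t) (Fin t) ℝ) + b • Jmat t

/-- Eigenvalues of a (Hermitian) matrix sorted increasingly with multiplicity. -/
def sortedEigs {t : ℕ} (C : Matrix (Fin t) (Fin t) ℝ) : Fin t → ℝ :=
  if h : C.IsHermitian then (fun i => h.eigenvalues (Tuple.sort h.eigenvalues i))
  else fun _ => 0

/-- `Φ_D(C) = (∏_{i=1}^{t-1} a_i)^{1/(t-1)}` (eigenvalues sorted increasingly). -/
def PhiD {t : ℕ} (C : Matrix (Fin t) (Fin t) ℝ) : ℝ :=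
  (∏ i ∈ Finset.univ.filter fun i : Fin t => (i : ℕ) ≠ 0, sortedEigs C i) ^ (((t : ℝ) - 1)⁻¹)

/-- `Φ_A(C) = (t-1)(∑_{i=1}^{t-1} a_i⁻¹)⁻¹` if `a_1 > 0`, else `0`. -/
def PhiA {t : ℕ} (C : Matrix (Fin t) (Fin t) ℝ) : ℝ :=
  if ∀ i : Fin t, (i : ℕ) ≠ 0 → 0 < sortedEigs C i then
    ((t : ℝ) - 1) *
      (∑ i ∈ Finset.univ.filter fun i : Fin t => (i : ℕ) ≠ 0, (sortedEigs C i)⁻¹)⁻¹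
  else 0

/-- `Φ_T(C) = tr(C)/(t-1)`. -/
def PhiT {t : ℕ} (C : Matrix (Fin t) (Fin t) ℝ) : ℝ := C.trace / ((t : ℝ) - 1)

/-- The criterion value `∫ Φ(C_{d,τ0,λ0}) g(dτ0)`. -/
def PhiCrit {p t : ℕ} (n : ℕ) (S : Matrix (Fin p) (Fin p) ℝ)
    (Phi : Matrix (Fin t) (Fin t) ℝ → ℝ) (g : Measure (Fin t → ℝ)) (l0 : ℝ)
    (w : TrtSeq p t → ℝ) : ℝ :=
  ∫ τ0, Phi (CInfo n S w τ0 l0) ∂g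

/-- Competing designs for a `Φ`-criterion. -/
def PhiAdmissible {p t : ℕ} (n : ℕ) (S : Matrix (Fin p) (Fin p) ℝ)
    (Phi : Matrix (Fin t) (Fin t) ℝ → ℝ) (g : Measure (Fin t → ℝ)) (l0 : ℝ)
    (w : TrtSeq p t → ℝ) : Prop :=
  IsDesign w ∧ (∀ᵐ τ0 ∂g, 0 < τ0 ⬝ᵥ (CD n S w 1 1 *ᵥ τ0)) ∧
    Integrable (fun τ0 => Phi (CInfo n S w τ0 l0)) g

/-- `d` is `Φ_{g,λ0}`-optimal. -/
def PhiOptimal {p t : ℕ} (n : ℕ) (S : Matrix (Fin p) (Fin p) ℝ)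
    (Phi : Matrix (Fin t) (Fin t) ℝ → ℝ) (g : Measure (Fin t → ℝ)) (l0 : ℝ)
    (w : TrtSeq p t → ℝ) : Prop :=
  ∀ w' : TrtSeq p t → ℝ, PhiAdmissible n S Phi g l0 w' →
    PhiCrit n S Phi g l0 w' ≤ PhiCrit n S Phi g l0 w

/-- `H_1(s) = F_s`, `H_2(s) = T_s + λ0 F_s` (for estimating `λ`). -/
def Hmat {p t : ℕ} (l0 : ℝ) (i : Fin 2) (s : TrtSeq p t) : Matrix (Fin p) (Fin t) ℝ :=
  if i = 0 then Fmat s else Tmat s + l0 • Fmat s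

/-- `Â_{sij} = B_t H_i(s)' B̃ H_j(s) B_t`. -/
def Ahat {p t : ℕ} (S : Matrix (Fin p) (Fin p) ℝ) (l0 : ℝ) (s : TrtSeq p t) (i j : Fin 2) :
    Matrix (Fin t) (Fin t) ℝ :=
  Bmat t * (Hmat l0 i s)ᵀ * Btil S * Hmat l0 j s * Bmat t

/-- `h_{sij} = tr Â_{sij}`. -/
def hseq {p t : ℕ} (S : Matrix (Fin p) (Fin p) ℝ) (l0 : ℝ) (s : TrtSeq p t) (i j : Fin 2) : ℝ :=
  (Ahat S l0 s i j).trace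

/-- `Â_{dij} = n ∑_s p_s Â_{sij}`. -/
def AhatD {p t : ℕ} (n : ℕ) (S : Matrix (Fin p) (Fin p) ℝ) (l0 : ℝ) (w : TrtSeq p t → ℝ)
    (i j : Fin 2) : Matrix (Fin t) (Fin t) ℝ :=
  (n : ℝ) • ∑ s : TrtSeq p t, w s • Ahat S l0 s i j

/-- `A_{dij} = Â_{dij} - n (∑_s p_s H_i(s) B_t)' B̃ (∑_s p_s H_j(s) B_t)`. -/
def AD {p t : ℕ} (n : ℕ) (S : Matrix (Fin p) (Fin p) ℝ) (l0 : ℝ) (w : TrtSeq p t → ℝ)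
    (i j : Fin 2) : Matrix (Fin t) (Fin t) ℝ :=
  AhatD n S l0 w i j -
    (n : ℝ) • ((∑ s : TrtSeq p t, w s • (Hmat l0 i s * Bmat t))ᵀ * Btil S *
      (∑ s : TrtSeq p t, w s • (Hmat l0 j s * Bmat t)))

/-- `G` is a generalized inverse of `A`. -/
def IsGInv {t : ℕ} (A G : Matrix (Fin t) (Fin t) ℝ) : Prop := A * G * A = A

/-- `A_d(G) = A_{d11} - A_{d12} G A_{d21}` with `A_{d21} = A_{d12}'`. -/
def ADfun {p t : ℕ} (n : ℕ) (S : Matrix (Fin p) (Fin p) ℝ) (l0 : ℝ) (w : TrtSeq p t → ℝ)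
    (G : Matrix (Fin t) (Fin t) ℝ) : Matrix (Fin t) (Fin t) ℝ :=
  AD n S l0 w 0 0 - AD n S l0 w 0 1 * G * (AD n S l0 w 0 1)ᵀ

/-- `r_s(x) = h_{s11} + 2 h_{s12} x + h_{s22} x²`. -/
def rSeq {p t : ℕ} (S : Matrix (Fin p) (Fin p) ℝ) (l0 : ℝ) (s : TrtSeq p t) (x : ℝ) : ℝ :=
  hseq S l0 s 0 0 + 2 * hseq S l0 s 0 1 * x + hseq S l0 s 1 1 * x ^ 2

/-- `r(x) = max_s r_s(x)`. -/
def rMax (p t : ℕ) (S : Matrix (Fin p) (Fin p) ℝ) (l0 : ℝ) (x : ℝ) : ℝ :=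
  sSup (Set.range fun s : TrtSeq p t => rSeq S l0 s x)

/-- `y_0 = inf_x r(x)`. -/
def yZero (p t : ℕ) (S : Matrix (Fin p) (Fin p) ℝ) (l0 : ℝ) : ℝ := ⨅ x : ℝ, rMax p t S l0 x

/-! Write `U_s = H_1(s) B_t`, `V_s = H_2(s) B_t` and `W_s = U_s + x V_s`. Each `A_{dij}` is `n`
times a weighted `B̃`-covariance of the families `U` and `V`, so together they form a positive
semidefinite block matrix. Hence `A_d(G)`, a generalized Schur complement of it, lies below `n`
times the covariance of `W`, and so its trace is at most that of the uncentred moment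
`n ∑ p_s W_s' B̃ W_s`, which is `n ∑ p_s r_s(x) ≤ n r(x)`. Averaging over all permutations turns
any matrix with zero row sums into a multiple of `B_t`, so the averaged information
about `λ` depends on `A_d(G)` only through its trace. For the given design and `x = x_0`, condition
(iii) makes the centring term vanish, (ii) then says `A_{d21} + x_0 A_{d22} = 0`, which forces
`A_d(G) = A_{d11} + x_0 A_{d12}`, and by (i) this is `(n y_0 / (t - 1)) B_t`: the bound is
attained. -/

section SchurComplement

open scoped ComplexOrder

variable {𝕜 m n : Type*} [RCLike 𝕜] [Finite m] [Fintype n]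
  {A : Matrix m m 𝕜} {B : Matrix m n 𝕜} {D G : Matrix n n 𝕜}

lemma mul_eq_zero_of_posSemidef_fromBlocks {l : Type*} (h : (fromBlocks A B Bᴴ D).PosSemidef)
    {Z : Matrix n l 𝕜} (hZ : D * Z = 0) : B * Z = 0 := by
  have := Fintype.ofFinite m
  obtain ⟨C, hC⟩ : ∃ C : Matrix (m ⊕ n) (m ⊕ n) 𝕜, fromBlocks A B Bᴴ D = Cᴴ * C := by
    open scoped MatrixOrder in
    simpa only [star_eq_conjTranspose] using CStarAlgebra.nonneg_iff_eq_star_mul_self.mp h.nonneg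
  rw [← fromCols_toCols C, conjTranspose_fromCols_eq_fromRows_conjTranspose,
    fromRows_mul_fromCols] at hC
  obtain ⟨-, hB, -, hD⟩ := fromBlocks_inj.mp hC
  rw [hD, conjTranspose_mul_self_mul_eq_zero] at hZ
  rw [hB, Matrix.mul_assoc, hZ, Matrix.mul_zero]

lemma mul_ginv_mul_conjTranspose_of_posSemidef_fromBlocks
    (h : (fromBlocks A B Bᴴ D).PosSemidef) (hG : D * G * D = D) : D * G * Bᴴ = Bᴴ := by
  have hD : Dᴴ = D := (isHermitian_fromBlocks_iff.mp h.isHermitian).2.2.2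
  have hker : D * (Gᴴ * D - 1) = 0 := by
    have hG' := congrArg conjTranspose hG
    rw [conjTranspose_mul, conjTranspose_mul, hD] at hG'
    rw [Matrix.mul_sub, hG', Matrix.mul_one, sub_self]
  have hB := mul_eq_zero_of_posSemidef_fromBlocks h hker
  rw [Matrix.mul_sub, Matrix.mul_one, sub_eq_zero] at hB
  simpa only [conjTranspose_mul, conjTranspose_conjTranspose, hD, Matrix.mul_assoc] using
    congrArg conjTranspose hB

lemma posSemidef_sub_schur_ginv (h : (fromBlocks A B Bᴴ D).PosSemidef) (hG : D * G * D = D)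
    (K : Matrix n m 𝕜) :
    ((A + B * K + Kᴴ * Bᴴ + Kᴴ * D * K) - (A - B * G * Bᴴ)).PosSemidef := by
  have hD : D.PosSemidef := h.submatrix Sum.inr
  have hDG : D * G * Bᴴ = Bᴴ := mul_ginv_mul_conjTranspose_of_posSemidef_fromBlocks h hG
  have hGD : B * Gᴴ * D = B := by
    simpa only [conjTranspose_mul, conjTranspose_conjTranspose, hD.isHermitian.eq,
      Matrix.mul_assoc] using congrArg conjTranspose hDG
  -- completing the square
  have hsq : (A + B * K + Kᴴ * Bᴴ + Kᴴ * D * K) - (A - B * G * Bᴴ) =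
      (K + G * Bᴴ)ᴴ * D * (K + G * Bᴴ) := by
    simp only [conjTranspose_add, conjTranspose_mul, conjTranspose_conjTranspose, Matrix.add_mul,
      Matrix.mul_add, hGD]
    rw [Matrix.mul_assoc (Kᴴ) D (G * Bᴴ), ← Matrix.mul_assoc D, hDG, ← Matrix.mul_assoc B]
    abel
  exact hsq ▸ hD.conjTranspose_mul_mul_same _

end SchurComplement

lemma posSemidef_sub_inv_smul_mul_vecMulVec_mul {m : Type*} [Fintype m] {A : Matrix m m ℝ}
    (hA : A.PosSemidef) (u : m → ℝ) :
    (A - (u ⬝ᵥ (A *ᵥ u))⁻¹ • (A * vecMulVec u u * A)).PosSemidef := by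
  set c := u ⬝ᵥ (A *ᵥ u)
  set Q := vecMulVec u u * A
  have hAt : Aᵀ = A := hA.isHermitian
  have hQt : Qᵀ = A * vecMulVec u u := by
    rw [transpose_mul, hAt, transpose_vecMulVec]
  have hQQ : Q * Q = c • Q := by
    rw [← Matrix.mul_assoc, Matrix.mul_assoc (vecMulVec u u), mul_vecMulVec,
      vecMulVec_mul_vecMulVec, vecMulVec_smul, Matrix.smul_mul]
  have hcc : c⁻¹ * (c⁻¹ * c) = c⁻¹ := by
    rcases eq_or_ne c 0 with hc | hc
    · simp [hc]
    · rw [inv_mul_cancel₀ hc, mul_one]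
  have hproj : A - c⁻¹ • (A * vecMulVec u u * A) = (1 - c⁻¹ • Q)ᵀ * A * (1 - c⁻¹ • Q) := by
    have hQA : A * vecMulVec u u * A = A * Q := Matrix.mul_assoc _ _ _
    rw [transpose_sub, transpose_one, transpose_smul, hQt]
    simp only [Matrix.sub_mul, Matrix.mul_sub, Matrix.smul_mul, Matrix.mul_smul, Matrix.one_mul,
      Matrix.mul_one, hQA, Matrix.mul_assoc A Q Q, hQQ, smul_sub, smul_smul, hcc]
    abel
  rw [hproj]
  exact hA.conjTranspose_mul_mul_same _

section WeightedCovariance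

variable {ι m k l : Type*} [Fintype ι] [Fintype m]

/-- The covariance, with respect to the weights `w` and the bilinear form `D`, of two families of
matrices; each `A_{dij}` is `n` times such a covariance. -/
def weightedCov (D : Matrix m m ℝ) (w : ι → ℝ) (U : ι → Matrix m k ℝ) (V : ι → Matrix m l ℝ) :
    Matrix k l ℝ :=
  ∑ s, w s • ((U s)ᵀ * D * V s) - (∑ s, w s • U s)ᵀ * D * ∑ s, w s • V s

variable {D : Matrix m m ℝ} {w : ι → ℝ}

lemma transpose_weightedCov (hD : D.IsSymm) (U : ι → Matrix m k ℝ) (V : ι → Matrix m l ℝ) :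
    (weightedCov D w U V)ᵀ = weightedCov D w V U := by
  simp only [weightedCov, transpose_sub, transpose_sum, transpose_smul, transpose_mul,
    transpose_transpose, hD.eq, Matrix.mul_assoc]

lemma weightedCov_add_smul_right (U : ι → Matrix m k ℝ) (V V' : ι → Matrix m l ℝ) (x : ℝ) :
    weightedCov D w U (V + x • V') = weightedCov D w U V + x • weightedCov D w U V' := by
  simp only [weightedCov, Pi.add_apply, Pi.smul_apply, Matrix.mul_add, Matrix.mul_smul,
    smul_add, smul_comm _ x, Finset.sum_add_distrib, ← Finset.smul_sum, smul_sub]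
  abel

lemma weightedCov_add_smul_left (U U' : ι → Matrix m k ℝ) (V : ι → Matrix m l ℝ) (x : ℝ) :
    weightedCov D w (U + x • U') V = weightedCov D w U V + x • weightedCov D w U' V := by
  simp only [weightedCov, Pi.add_apply, Pi.smul_apply, transpose_add, transpose_smul,
    Matrix.add_mul, Matrix.smul_mul, smul_add, smul_comm _ x, Finset.sum_add_distrib,
    ← Finset.smul_sum, smul_sub]
  abel

lemma weightedCov_mul_right [Fintype l] {r : Type*} (U : ι → Matrix m k ℝ) (V : ι → Matrix m l ℝ)
    (N : Matrix l r ℝ) :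
    weightedCov D w U (fun s => V s * N) = weightedCov D w U V * N := by
  simp only [weightedCov, Matrix.sub_mul, Matrix.sum_mul, Matrix.smul_mul, Matrix.mul_assoc]

lemma weightedCov_eq_sum_of_mul_sum_eq_zero {V : ι → Matrix m l ℝ}
    (hV : D * ∑ s, w s • V s = 0) (U : ι → Matrix m k ℝ) :
    weightedCov D w U V = ∑ s, w s • ((U s)ᵀ * D * V s) := by
  rw [weightedCov, Matrix.mul_assoc, hV, Matrix.mul_zero, sub_zero]

lemma fromBlocks_weightedCov (U : ι → Matrix m k ℝ) (V : ι → Matrix m l ℝ) :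
    fromBlocks (weightedCov D w U U) (weightedCov D w U V) (weightedCov D w V U)
        (weightedCov D w V V) =
      weightedCov D w (fun s => fromCols (U s) (V s)) (fun s => fromCols (U s) (V s)) := by
  ext (i | i) (j | j) <;>
    simp [weightedCov, Matrix.mul_apply, Matrix.sum_apply]

lemma weightedCov_eq_sum_centered (hw : ∑ s, w s = 1) (U : ι → Matrix m k ℝ)
    (V : ι → Matrix m l ℝ) :
    weightedCov D w U V =
      ∑ s, w s • ((U s - ∑ r, w r • U r)ᵀ * D * (V s - ∑ r, w r • V r)) := by
  set M := ∑ r, w r • U r with hM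
  set N := ∑ r, w r • V r with hN
  have hleft : ∑ s, w s • ((U s)ᵀ * D * N) = Mᵀ * D * N := by
    simp only [hM, transpose_sum, transpose_smul, Matrix.sum_mul, Matrix.smul_mul]
  have hright : ∑ s, w s • (Mᵀ * D * V s) = Mᵀ * D * N := by
    simp only [hN, Matrix.mul_sum, Matrix.mul_smul]
  have hconst : ∑ s, w s • (Mᵀ * D * N) = Mᵀ * D * N := by
    rw [← Finset.sum_smul, hw, one_smul]
  simp only [weightedCov, transpose_sub, Matrix.sub_mul, Matrix.mul_sub, smul_sub,
    Finset.sum_sub_distrib, hleft, hright, hconst, ← hM, ← hN]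
  abel

lemma posSemidef_weightedCov [Finite k] (hD : D.PosSemidef) (hw0 : ∀ s, 0 ≤ w s)
    (hw1 : ∑ s, w s = 1) (U : ι → Matrix m k ℝ) : (weightedCov D w U U).PosSemidef := by
  rw [weightedCov_eq_sum_centered hw1]
  exact posSemidef_sum _ fun s _ => (hD.conjTranspose_mul_mul_same _).smul (hw0 s)

lemma trace_weightedCov_self_le [Fintype k] (hD : D.PosSemidef) (U : ι → Matrix m k ℝ) :
    (weightedCov D w U U).trace ≤ ∑ s, w s * ((U s)ᵀ * D * U s).trace := by
  have hmean : 0 ≤ ((∑ s, w s • U s)ᵀ * D * ∑ s, w s • U s).trace :=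
    (hD.conjTranspose_mul_mul_same _).trace_nonneg
  simpa only [weightedCov, trace_sub, trace_sum, trace_smul, smul_eq_mul, tsub_le_iff_right,
    le_add_iff_nonneg_right] using hmean

end WeightedCovariance

section CenteringMatrices

lemma Jmat_eq_vecMulVec (m : ℕ) : Jmat m = vecMulVec (fun _ => 1) (fun _ => 1) := by
  ext i j
  simp [Jmat, vecMulVec_apply]

lemma posSemidef_Btil {p : ℕ} {S : Matrix (Fin p) (Fin p) ℝ} (hS : S.PosDef) :
    (Btil S).PosSemidef := by
  rw [Btil, Jmat_eq_vecMulVec]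
  exact posSemidef_sub_inv_smul_mul_vecMulVec_mul hS.inv.posSemidef _

lemma isSymm_Btil {p : ℕ} {S : Matrix (Fin p) (Fin p) ℝ} (hS : S.PosDef) : (Btil S).IsSymm :=
  (posSemidef_Btil hS).isHermitian

lemma Bmat_apply {t : ℕ} (i j : Fin t) :
    Bmat t i j = (1 : Matrix (Fin t) (Fin t) ℝ) i j - (t : ℝ)⁻¹ := by
  simp [Bmat, Jmat]

lemma transpose_Bmat (t : ℕ) : (Bmat t)ᵀ = Bmat t := by
  simp [Bmat, Jmat_eq_vecMulVec, transpose_vecMulVec]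

lemma sum_Bmat_apply {t : ℕ} (i : Fin t) : ∑ j, Bmat t i j = 0 := by
  have ht : (t : ℝ) ≠ 0 := Nat.cast_ne_zero.mpr i.pos.ne'
  simp [Bmat_apply, one_apply, ht]

lemma Bmat_mul_self (t : ℕ) : Bmat t * Bmat t = Bmat t := by
  have hJ : Bmat t * Jmat t = 0 := by
    ext i j
    simpa [mul_apply, Jmat] using sum_Bmat_apply i
  nth_rw 2 [Bmat]
  rw [Matrix.mul_sub, Matrix.mul_one, Matrix.mul_smul, hJ, smul_zero, sub_zero]

lemma posSemidef_Bmat (t : ℕ) : (Bmat t).PosSemidef := by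
  simpa [transpose_Bmat, Bmat_mul_self] using posSemidef_conjTranspose_mul_self (Bmat t)

lemma trace_Bmat {t : ℕ} (ht : t ≠ 0) : (Bmat t).trace = t - 1 := by
  simp [Bmat_apply, trace, ht]

lemma sum_apply_eq_zero_of_mul_Bmat {t : ℕ} {M : Matrix (Fin t) (Fin t) ℝ}
    (hM : M * Bmat t = M) (i : Fin t) : ∑ j, M i j = 0 := by
  rw [← hM]
  simp only [mul_apply]
  rw [Finset.sum_comm]
  simp only [← Finset.mul_sum, sum_Bmat_apply, mul_zero, Finset.sum_const_zero]

end CenteringMatrices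

section PermutationAverage

variable {t : ℕ} {M : Matrix (Fin t) (Fin t) ℝ}

lemma sub_one_smul_eq_trace_smul_Bmat (hinv : ∀ π : Equiv.Perm (Fin t), M.submatrix π π = M)
    (hrow : ∀ i, ∑ j, M i j = 0) : ((t : ℝ) - 1) • M = M.trace • Bmat t := by
  have hdiag (i j) : M j j = M i i := by
    simpa using congrFun₂ (hinv (Equiv.swap i j)) i i
  have hoff {i j k l} (hij : i ≠ j) (hkl : k ≠ l) : M k l = M i j := by
    obtain ⟨π, rfl, rfl⟩ := MulAction.is_two_pretransitive_iff.mp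
      (Equiv.Perm.isMultiplyPretransitive (Fin t) 2) hij hkl
    exact congrFun₂ (hinv π) i j
  have htrace (i) : M.trace = t * M i i := by
    simp [trace, hdiag i]
  have hsum {i j} (hij : i ≠ j) : M i i + (t - 1) * M i j = 0 := by
    have ht : 1 ≤ t := i.pos
    rw [← hrow i, ← Finset.add_sum_erase _ _ (Finset.mem_univ i),
      Finset.sum_congr rfl fun k hk => hoff hij (Finset.ne_of_mem_erase hk).symm]
    simp [Nat.cast_sub ht]
  ext i j
  have ht : (t : ℝ) ≠ 0 := Nat.cast_ne_zero.mpr i.pos.ne'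
  rw [htrace i]
  rcases eq_or_ne i j with rfl | hij
  · rw [Matrix.smul_apply, Matrix.smul_apply, Bmat_apply, one_apply_eq, smul_eq_mul, smul_eq_mul]
    field_simp
  · rw [Matrix.smul_apply, Matrix.smul_apply, Bmat_apply, one_apply_ne hij, smul_eq_mul,
      smul_eq_mul]
    field_simp
    linear_combination hsum hij

lemma transpose_Smat_mul_mul_Smat (M : Matrix (Fin t) (Fin t) ℝ) (σ : Equiv.Perm (Fin t)) :
    (Smat σ)ᵀ * M * Smat σ = M.submatrix σ.symm σ.symm := by
  ext i j
  simp [mul_apply, Smat, ← Equiv.symm_apply_eq]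

lemma sum_perm_transpose_Smat_mul_mul_Smat (hM : ∀ i, ∑ j, M i j = 0) :
    ((t : ℝ) - 1) • ∑ σ : Equiv.Perm (Fin t), (Smat σ)ᵀ * M * Smat σ =
      (t.factorial * M.trace) • Bmat t := by
  set N := ∑ σ : Equiv.Perm (Fin t), (Smat σ)ᵀ * M * Smat σ with hN
  have hNapply (i j) : N i j = ∑ σ : Equiv.Perm (Fin t), M (σ i) (σ j) := by
    rw [← Equiv.sum_comp (Equiv.inv _)]
    simp only [hN, Matrix.sum_apply, transpose_Smat_mul_mul_Smat]
    rfl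
  have hinv (π : Equiv.Perm (Fin t)) : N.submatrix π π = N := by
    ext i j
    rw [submatrix_apply, hNapply, hNapply,
      ← Equiv.sum_comp (Equiv.mulRight π) fun σ : Equiv.Perm (Fin t) => M (σ i) (σ j)]
    rfl
  have hrow (i) : ∑ j, N i j = 0 := by
    simp only [hNapply]
    rw [Finset.sum_comm]
    exact Finset.sum_eq_zero fun σ _ => (Equiv.sum_comp σ (M (σ i))).trans (hM _)
  have htrace : N.trace = t.factorial * M.trace := by
    have hσ (σ : Equiv.Perm (Fin t)) : ((Smat σ)ᵀ * M * Smat σ).trace = M.trace := by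
      rw [transpose_Smat_mul_mul_Smat]
      exact Equiv.sum_comp σ.symm fun i => M i i
    simp [hN, trace_sum, hσ, Fintype.card_perm]
  rw [← htrace]
  exact sub_one_smul_eq_trace_smul_Bmat hinv hrow

lemma average_perm_quadForm (ht : t ≠ 1) (hM : M * Bmat t = M) (τ : Fin t → ℝ) :
    (t.factorial : ℝ)⁻¹ * ∑ σ : Equiv.Perm (Fin t), τ ⬝ᵥ (((Smat σ)ᵀ * M * Smat σ) *ᵥ τ) =
      M.trace / ((t : ℝ) - 1) * (τ ⬝ᵥ (Bmat t *ᵥ τ)) := by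
  have hfac : (t.factorial : ℝ) ≠ 0 := Nat.cast_ne_zero.mpr t.factorial_ne_zero
  have ht' : (t : ℝ) - 1 ≠ 0 := sub_ne_zero.mpr (Nat.cast_ne_one.mpr ht)
  have hsum := congrArg (fun N => τ ⬝ᵥ (N *ᵥ τ))
    (sum_perm_transpose_Smat_mul_mul_Smat (sum_apply_eq_zero_of_mul_Bmat hM))
  simp only [smul_mulVec, dotProduct_smul, sum_mulVec, dotProduct_sum, smul_eq_mul] at hsum
  field_simp
  rw [mul_comm, hsum]

end PermutationAverage

section Information

variable {p t : ℕ} {n : ℕ} {S : Matrix (Fin p) (Fin p) ℝ} {l0 : ℝ} {w : TrtSeq p t → ℝ}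
  {G : Matrix (Fin t) (Fin t) ℝ}

/-- The matrices `H_i(s) B_t`, the families whose covariances are the `A_{dij}`. -/
def centeredHmat (l0 : ℝ) (i : Fin 2) (s : TrtSeq p t) : Matrix (Fin p) (Fin t) ℝ :=
  Hmat l0 i s * Bmat t

lemma centeredHmat_mul_Bmat (l0 : ℝ) (i : Fin 2) (s : TrtSeq p t) :
    centeredHmat l0 i s * Bmat t = centeredHmat l0 i s := by
  rw [centeredHmat, Matrix.mul_assoc, Bmat_mul_self]

/-- The family `U + x V`, where `U` and `V` are the families `H_1(s) B_t` and `H_2(s) B_t`; the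
trace of `(U_s + x V_s)' B̃ (U_s + x V_s)` is `r_s(x)`. -/
def combinedHmat (l0 x : ℝ) : TrtSeq p t → Matrix (Fin p) (Fin t) ℝ :=
  centeredHmat l0 0 + x • centeredHmat l0 1

lemma combinedHmat_apply (l0 x : ℝ) (s : TrtSeq p t) :
    combinedHmat l0 x s = (Fmat s + x • (Tmat s + l0 • Fmat s)) * Bmat t := by
  simp [combinedHmat, centeredHmat, Hmat, Matrix.add_mul]

lemma Ahat_eq (S : Matrix (Fin p) (Fin p) ℝ) (l0 : ℝ) (s : TrtSeq p t) (i j : Fin 2) :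
    Ahat S l0 s i j = (centeredHmat l0 i s)ᵀ * Btil S * centeredHmat l0 j s := by
  simp only [Ahat, centeredHmat, transpose_mul, transpose_Bmat, Matrix.mul_assoc]

lemma Ahat_add_smul (S : Matrix (Fin p) (Fin p) ℝ) (l0 : ℝ) (s : TrtSeq p t) (i : Fin 2) (x : ℝ) :
    Ahat S l0 s i 0 + x • Ahat S l0 s i 1 =
      (centeredHmat l0 i s)ᵀ * Btil S * combinedHmat l0 x s := by
  simp only [Ahat_eq, combinedHmat, Pi.add_apply, Pi.smul_apply, Matrix.mul_add, Matrix.mul_smul]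

lemma AD_eq_smul_weightedCov (i j : Fin 2) :
    AD n S l0 w i j =
      (n : ℝ) • weightedCov (Btil S) w (centeredHmat l0 i) (centeredHmat l0 j) := by
  simp only [AD, AhatD, weightedCov, Ahat_eq, centeredHmat, smul_sub]

lemma transpose_AD (hS : S.PosDef) (i j : Fin 2) : (AD n S l0 w i j)ᵀ = AD n S l0 w j i := by
  rw [AD_eq_smul_weightedCov, transpose_smul,
    transpose_weightedCov (isSymm_Btil hS), ← AD_eq_smul_weightedCov]

lemma AD_mul_Bmat (i j : Fin 2) : AD n S l0 w i j * Bmat t = AD n S l0 w i j := by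
  simp only [AD_eq_smul_weightedCov, Matrix.smul_mul, ← weightedCov_mul_right,
    centeredHmat_mul_Bmat]

lemma ADfun_mul_Bmat (hS : S.PosDef) : ADfun n S l0 w G * Bmat t = ADfun n S l0 w G := by
  rw [ADfun, transpose_AD hS, Matrix.sub_mul, Matrix.mul_assoc, AD_mul_Bmat, AD_mul_Bmat]

lemma posSemidef_fromBlocks_AD (hS : S.PosDef) (hw : IsDesign w) :
    (fromBlocks (AD n S l0 w 0 0) (AD n S l0 w 0 1) (AD n S l0 w 0 1)ᴴ
      (AD n S l0 w 1 1)).PosSemidef := by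
  rw [conjTranspose_eq_transpose_of_trivial, transpose_AD hS]
  simp only [AD_eq_smul_weightedCov, ← fromBlocks_smul, fromBlocks_weightedCov]
  exact (posSemidef_weightedCov (posSemidef_Btil hS) hw.1 hw.2 _).smul n.cast_nonneg

lemma trace_combinedHmat_moment (hS : S.PosDef) (s : TrtSeq p t) (x : ℝ) :
    ((combinedHmat l0 x s)ᵀ * Btil S * combinedHmat l0 x s).trace = rSeq S l0 s x := by
  have hsymm : (Ahat S l0 s 1 0).trace = (Ahat S l0 s 0 1).trace := by
    rw [← trace_transpose, Ahat_eq, Ahat_eq, transpose_mul, transpose_mul,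
      transpose_transpose, (isSymm_Btil hS).eq, Matrix.mul_assoc]
  have hexpand : (combinedHmat l0 x s)ᵀ * Btil S * combinedHmat l0 x s =
      (Ahat S l0 s 0 0 + x • Ahat S l0 s 0 1) + x • (Ahat S l0 s 1 0 + x • Ahat S l0 s 1 1) := by
    simp only [Ahat_add_smul]
    simp only [combinedHmat, Pi.add_apply, Pi.smul_apply, transpose_add, transpose_smul,
      Matrix.add_mul, Matrix.smul_mul]
  simp only [hexpand, trace_add, trace_smul, smul_eq_mul, hsymm, rSeq, hseq]
  ring

lemma rSeq_le_rMax (S : Matrix (Fin p) (Fin p) ℝ) (l0 : ℝ) (s : TrtSeq p t) (x : ℝ) :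
    rSeq S l0 s x ≤ rMax p t S l0 x :=
  le_csSup (Set.finite_range _).bddAbove ⟨s, rfl⟩

lemma trace_ADfun_le (hS : S.PosDef) (hw : IsDesign w) (hG : IsGInv (AD n S l0 w 1 1) G) (x : ℝ) :
    (ADfun n S l0 w G).trace ≤ n * rMax p t S l0 x := by
  set W : TrtSeq p t → Matrix (Fin p) (Fin t) ℝ := combinedHmat l0 x with hW
  have hcov : (n : ℝ) • weightedCov (Btil S) w W W =
      AD n S l0 w 0 0 + x • AD n S l0 w 0 1 + x • AD n S l0 w 1 0 + (x * x) • AD n S l0 w 1 1 := by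
    simp only [hW, combinedHmat, weightedCov_add_smul_left, weightedCov_add_smul_right,
      AD_eq_smul_weightedCov]
    module
  have hschur : (ADfun n S l0 w G).trace ≤ ((n : ℝ) • weightedCov (Btil S) w W W).trace := by
    have h := (posSemidef_sub_schur_ginv (posSemidef_fromBlocks_AD hS hw) hG
      (x • (1 : Matrix (Fin t) (Fin t) ℝ))).trace_nonneg
    simp only [conjTranspose_eq_transpose_of_trivial, transpose_smul, transpose_one,
      Matrix.mul_smul, Matrix.smul_mul, Matrix.mul_one, Matrix.one_mul, smul_smul] at h
    rw [transpose_AD hS 0 1, ← hcov, trace_sub, sub_nonneg] at h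
    rwa [ADfun, transpose_AD hS 0 1]
  have hmoment : (weightedCov (Btil S) w W W).trace ≤ rMax p t S l0 x :=
    calc (weightedCov (Btil S) w W W).trace
        ≤ ∑ s, w s * ((W s)ᵀ * Btil S * W s).trace :=
          trace_weightedCov_self_le (posSemidef_Btil hS) W
      _ ≤ ∑ s, w s * rMax p t S l0 x := by
          simp only [hW, trace_combinedHmat_moment hS]
          gcongr with s
          · exact hw.1 s
          · exact rSeq_le_rMax S l0 s x
      _ = rMax p t S l0 x := by rw [← Finset.sum_mul, hw.2, one_mul]
  rw [trace_smul, smul_eq_mul] at hschur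
  exact hschur.trans (by gcongr)

lemma ADfun_eq_of_AD_add_smul_eq_zero (hS : S.PosDef) (hG : IsGInv (AD n S l0 w 1 1) G) {x : ℝ}
    (h : AD n S l0 w 1 0 + x • AD n S l0 w 1 1 = 0) :
    ADfun n S l0 w G = AD n S l0 w 0 0 + x • AD n S l0 w 0 1 := by
  have h10 : AD n S l0 w 1 0 = -(x • AD n S l0 w 1 1) := eq_neg_of_add_eq_zero_left h
  have h01 : AD n S l0 w 0 1 = -(x • AD n S l0 w 1 1) := by
    rw [← transpose_AD hS 1 0, h10, transpose_neg, transpose_smul, transpose_AD hS]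
  rw [IsGInv] at hG
  rw [ADfun, transpose_AD hS, h10, h01]
  simp only [Matrix.neg_mul, Matrix.mul_neg, Matrix.smul_mul, Matrix.mul_smul, hG]
  module

lemma AD_add_smul_eq {x : ℝ}
    (h : ∑ s, w s • (Btil S * (Fmat s + x • (Tmat s + l0 • Fmat s)) * Bmat t) = 0) (i : Fin 2) :
    AD n S l0 w i 0 + x • AD n S l0 w i 1 =
      (n : ℝ) • ∑ s, w s • (Ahat S l0 s i 0 + x • Ahat S l0 s i 1) := by
  have hmean : Btil S * ∑ s, w s • combinedHmat l0 x s = 0 := by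
    rw [← h, Matrix.mul_sum]
    refine Finset.sum_congr rfl fun s _ => ?_
    rw [Matrix.mul_smul, combinedHmat_apply, Matrix.mul_assoc]
  simp only [Ahat_add_smul, ← weightedCov_eq_sum_of_mul_sum_eq_zero hmean]
  simp only [combinedHmat, weightedCov_add_smul_right, AD_eq_smul_weightedCov, smul_add,
    smul_comm x (n : ℝ)]

end Information

lemma sum_filter_smul_of_support {ι E : Type*} [Fintype ι] [AddCommMonoid E] [Module ℝ E]
    {w : ι → ℝ} {P : ι → Prop} [DecidablePred P] (hw : ∀ s, ¬P s → w s = 0) (f : ι → E) :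
    ∑ s ∈ Finset.univ.filter P, w s • f s = ∑ s, w s • f s :=
  Finset.sum_filter_of_ne fun s _ hs => by
    by_contra hP
    exact hs (by rw [hw s hP, zero_smul])

theorem stmt16_general (p t n : ℕ) (ht : 2 ≤ t) (S : Matrix (Fin p) (Fin p) ℝ) (hS : S.PosDef)
    (l0 x0 : ℝ) (w : TrtSeq p t → ℝ)
    (h1 : ∑ s, w s • (Ahat S l0 s 0 0 + x0 • Ahat S l0 s 0 1) =
      (rMax p t S l0 x0 / ((t : ℝ) - 1)) • Bmat t)
    (h2 : ∑ s, w s • (Ahat S l0 s 1 0 + x0 • Ahat S l0 s 1 1) = 0)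
    (h3 : ∑ s, w s • (Btil S * (Fmat s + x0 • (Tmat s + l0 • Fmat s)) * Bmat t) = 0) :
    (∀ G : Matrix (Fin t) (Fin t) ℝ, IsGInv (AD n S l0 w 1 1) G →
      ADfun n S l0 w G = ((n : ℝ) * rMax p t S l0 x0 / ((t : ℝ) - 1)) • Bmat t) ∧
    ∀ (τ0 : Fin t → ℝ) (w' : TrtSeq p t → ℝ), IsDesign w' →
      ∀ G' : Matrix (Fin t) (Fin t) ℝ, IsGInv (AD n S l0 w' 1 1) G' →
      ∀ G : Matrix (Fin t) (Fin t) ℝ, IsGInv (AD n S l0 w 1 1) G →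
      ((Nat.factorial t : ℝ))⁻¹ * ∑ σ : Equiv.Perm (Fin t),
          τ0 ⬝ᵥ (((Smat σ)ᵀ * ADfun n S l0 w' G' * Smat σ) *ᵥ τ0) ≤
        ((Nat.factorial t : ℝ))⁻¹ * ∑ σ : Equiv.Perm (Fin t),
          τ0 ⬝ᵥ (((Smat σ)ᵀ * ADfun n S l0 w G * Smat σ) *ᵥ τ0) := by
  have ht' : (0 : ℝ) < t - 1 := sub_pos.mpr (by exact_mod_cast ht)
  have hinfo (G) (hG : IsGInv (AD n S l0 w 1 1) G) :
      ADfun n S l0 w G = ((n : ℝ) * rMax p t S l0 x0 / ((t : ℝ) - 1)) • Bmat t := by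
    have h10 := AD_add_smul_eq (n := n) h3 1
    rw [h2, smul_zero] at h10
    rw [ADfun_eq_of_AD_add_smul_eq_zero hS hG h10, AD_add_smul_eq h3, h1, smul_smul, mul_div_assoc]
  refine ⟨hinfo, fun τ0 w' hw' G' hG' G hG => ?_⟩
  rw [average_perm_quadForm (by lia) (ADfun_mul_Bmat hS),
    average_perm_quadForm (by lia) (ADfun_mul_Bmat hS)]
  have htrace : (ADfun n S l0 w' G').trace ≤ (ADfun n S l0 w G).trace := by
    rw [hinfo G hG, trace_smul, trace_Bmat (by lia), smul_eq_mul, div_mul_cancel₀ _ ht'.ne']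
    exact trace_ADfun_le hS hw' hG' x0
  have hτ0 : 0 ≤ τ0 ⬝ᵥ (Bmat t *ᵥ τ0) := (posSemidef_Bmat t).dotProduct_mulVec_nonneg τ0
  gcongr

/-- the five conditions yield `A_d(G) = n y_0 B_t/(t-1)` and maximize the
symmetrized Fisher information for the proportionality parameter `λ`. -/
theorem stmt16 (p t n : ℕ) (hp : 2 ≤ p) (ht : 3 ≤ t) (hn : 1 ≤ n)
    (S : Matrix (Fin p) (Fin p) ℝ) (hS : S.PosDef) (l0 : ℝ)
    (x0 : ℝ) (hx0 : rMax p t S l0 x0 = yZero p t S l0)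
    (hx0u : ∀ x : ℝ, rMax p t S l0 x = yZero p t S l0 → x = x0)
    (w : TrtSeq p t → ℝ) (hw : IsDesign w)
    (h1 : ∑ s ∈ Finset.univ.filter (fun s : TrtSeq p t => rSeq S l0 s x0 = yZero p t S l0),
        w s • (Ahat S l0 s 0 0 + x0 • Ahat S l0 s 0 1) =
      (yZero p t S l0 / ((t : ℝ) - 1)) • Bmat t)
    (h2 : ∑ s ∈ Finset.univ.filter (fun s : TrtSeq p t => rSeq S l0 s x0 = yZero p t S l0),
        w s • (Ahat S l0 s 1 0 + x0 • Ahat S l0 s 1 1) = 0)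
    (h3 : ∑ s ∈ Finset.univ.filter (fun s : TrtSeq p t => rSeq S l0 s x0 = yZero p t S l0),
        w s • (Btil S * (Fmat s + x0 • (Tmat s + l0 • Fmat s)) * Bmat t) = 0)
    (h4 : ∑ s ∈ Finset.univ.filter (fun s : TrtSeq p t => rSeq S l0 s x0 = yZero p t S l0),
        w s = 1)
    (h5 : ∀ s : TrtSeq p t, rSeq S l0 s x0 ≠ yZero p t S l0 → w s = 0) :
    (∀ G : Matrix (Fin t) (Fin t) ℝ, IsGInv (AD n S l0 w 1 1) G →
      ADfun n S l0 w G = ((n : ℝ) * yZero p t S l0 / ((t : ℝ) - 1)) • Bmat t) ∧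
    ∀ (τ0 : Fin t → ℝ) (w' : TrtSeq p t → ℝ), IsDesign w' →
      ∀ G' : Matrix (Fin t) (Fin t) ℝ, IsGInv (AD n S l0 w' 1 1) G' →
      ∀ G : Matrix (Fin t) (Fin t) ℝ, IsGInv (AD n S l0 w 1 1) G →
      ((Nat.factorial t : ℝ))⁻¹ * ∑ σ : Equiv.Perm (Fin t),
          τ0 ⬝ᵥ (((Smat σ)ᵀ * ADfun n S l0 w' G' * Smat σ) *ᵥ τ0) ≤
        ((Nat.factorial t : ℝ))⁻¹ * ∑ σ : Equiv.Perm (Fin t),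
          τ0 ⬝ᵥ (((Smat σ)ᵀ * ADfun n S l0 w G * Smat σ) *ᵥ τ0) := by
  rw [sum_filter_smul_of_support h5, ← hx0] at h1
  rw [sum_filter_smul_of_support h5] at h2 h3
  exact hx0 ▸ stmt16_general p t n (by lia) S hS l0 x0 w h1 h2 h3
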